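/- Let k be a positive integer, let μ ∈ D_alg(k), and set f = R_μ and g = η_μ. Then for every n ≥ 1 and all i₁,…,i_n ∈ {1,…,k}: Cf_{(i₁,…,i_n)}(f) = Σ_{ρ ∈ NC(n), ρ ≪ 1_n} (−1)^{1+|ρ|} Cf_{(i₁,…,i_n);ρ}(g). -/

import Mathlib

open Finset

attribute [local instance] Classical.propDecidable

open scoped ComplexOrder

namespace BBP

/-- Partitions of `{1,…,m}` modeled as `Finpartition`s of `univ : Finset (Fin m)`. -/
abbrev FP (m : ℕ) := Finpartition (Finset.univ : Finset (Fin m))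

noncomputable instance (m : ℕ) : Fintype (FP m) :=
  Fintype.ofInjective (fun π : FP m => π.parts) fun a b h => by
    cases a; cases b; simpa using h

/-- `x` is the minimum of the set `C`. -/
def IsMinOf {m : ℕ} (x : Fin m) (C : Finset (Fin m)) : Prop :=
  x ∈ C ∧ ∀ y ∈ C, x ≤ y

/-- `x` is the maximum of the set `C`. -/
def IsMaxOf {m : ℕ} (x : Fin m) (C : Finset (Fin m)) : Prop :=
  x ∈ C ∧ ∀ y ∈ C, y ≤ x

/-- `a` and `b` lie in one block of `π`. -/
def SameBlock {m : ℕ} (π : FP m) (a b : Fin m) : Prop :=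
  ∃ B ∈ π.parts, a ∈ B ∧ b ∈ B

/-- `π` is non-crossing: if `i<j<k<l`, `i,k` in one block and `j,l` in one block,
then all of them are in one block. -/
def IsNC {m : ℕ} (π : FP m) : Prop :=
  ∀ i j k l : Fin m, i < j → j < k → k < l →
    SameBlock π i k → SameBlock π j l → SameBlock π i j

/-- `A` embraces `B` : `min A ≤ min B` and `max B ≤ max A`. -/
def Embraces {m : ℕ} (A B : Finset (Fin m)) : Prop :=
  ∃ a₁ a₂ b₁ b₂ : Fin m, IsMinOf a₁ A ∧ IsMaxOf a₂ A ∧ IsMinOf b₁ B ∧ IsMaxOf b₂ B ∧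
    a₁ ≤ b₁ ∧ b₂ ≤ a₂

/-- `B` strictly embraces `A` : `min B < min A` and `max A < max B`. -/
def StrictlyEmbraces {m : ℕ} (B A : Finset (Fin m)) : Prop :=
  ∃ b₁ b₂ a₁ a₂ : Fin m, IsMinOf b₁ B ∧ IsMaxOf b₂ B ∧ IsMinOf a₁ A ∧ IsMaxOf a₂ A ∧
    b₁ < a₁ ∧ a₂ < b₂

/-- `A` is an outer block of `π`. -/
def IsOuter {m : ℕ} (π : FP m) (A : Finset (Fin m)) : Prop :=
  A ∈ π.parts ∧ ¬ ∃ B ∈ π.parts, StrictlyEmbraces B A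

/-- The number `|π|_out` of outer blocks of `π`. -/
noncomputable def numOuter {m : ℕ} (π : FP m) : ℕ :=
  (π.parts.filter fun A => IsOuter π A).card

/-- Reversed refinement order: every block of `ρ` is a union of blocks of `π`. -/
def Refines {m : ℕ} (π ρ : FP m) : Prop :=
  ∀ B ∈ π.parts, ∃ C ∈ ρ.parts, B ⊆ C

/-- The partial order `π ≪ ρ`. -/
def Ll {m : ℕ} (π ρ : FP m) : Prop :=
  Refines π ρ ∧
    ∀ C ∈ ρ.parts, ∃ B ∈ π.parts, ∃ x y : Fin m,
      IsMinOf x C ∧ IsMaxOf y C ∧ x ∈ B ∧ y ∈ B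

/-- The partition `1ₙ` of `{1,…,n+1}` with a single block. -/
noncomputable def fullPart (n : ℕ) : FP (n+1) :=
  Finpartition.indiscrete (by simpa using (Finset.univ_nonempty (α := Fin (n+1))).ne_empty)

/-- `π` is an interval partition. -/
def IsIntervalPartition {m : ℕ} (π : FP m) : Prop :=
  ∀ B ∈ π.parts, ∀ x ∈ B, ∀ z ∈ B, ∀ y : Fin m, x ≤ y → y ≤ z → y ∈ B

/-- `σ` is the permutation associated to `π` : on each block `{b₁ < ⋯ < b_q}` it is the
cycle `b₁ ↦ b₂ ↦ ⋯ ↦ b_q ↦ b₁`. -/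
def IsAssocPerm {m : ℕ} (π : FP m) (σ : Equiv.Perm (Fin m)) : Prop :=
  ∀ B ∈ π.parts, ∀ b ∈ B, σ b ∈ B ∧
    ((b < σ b ∧ ∀ x ∈ B, b < x → σ b ≤ x) ∨ (IsMaxOf b B ∧ IsMinOf (σ b) B))

/-- `κ` is the Kreweras complement of `π`, characterized by `P_κ = P_π⁻¹ ∘ P_{1ₙ}`,
where `P_{1ₙ}` is the cycle `1 ↦ 2 ↦ ⋯ ↦ n ↦ 1` (i.e. `finRotate`). -/
def IsKrewerasPair {m : ℕ} (π κ : FP m) : Prop :=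
  ∃ σπ σκ : Equiv.Perm (Fin m), IsAssocPerm π σπ ∧ IsAssocPerm κ σκ ∧
    σκ = σπ⁻¹ * finRotate m

/-- the element `2a-1` of `{1,…,2n}`, in `Fin (2n)` (0-indexed). -/
def oddEmb {n : ℕ} (a : Fin n) : Fin (2*n) := ⟨2*a.val, by have := a.isLt; omega⟩

/-- the element `2a` of `{1,…,2n}`, in `Fin (2n)` (0-indexed). -/
def evenEmb {n : ℕ} (a : Fin n) : Fin (2*n) := ⟨2*a.val + 1, by have := a.isLt; omega⟩

/-- `θ = π^(odd) ∪ ρ^(even)` : the blocks of `θ` are the sets `{2a-1 : a ∈ A}` for `A`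
a block of `π` and the sets `{2b : b ∈ B}` for `B` a block of `ρ`. -/
def IsOddEvenJoin {n : ℕ} (π ρ : FP n) (θ : FP (2*n)) : Prop :=
  θ.parts = π.parts.image (fun B => B.image oddEmb) ∪
    ρ.parts.image (fun B => B.image evenEmb)

/-- a block consisting of odd elements of `{1,…,2n}` (even 0-indexed values). -/
def OddBlock {m : ℕ} (B : Finset (Fin m)) : Prop := ∀ x ∈ B, x.val % 2 = 0

/-- a block consisting of even elements of `{1,…,2n}` (odd 0-indexed values). -/
def EvenBlock {m : ℕ} (B : Finset (Fin m)) : Prop := ∀ x ∈ B, x.val % 2 = 1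

/-- every block of `θ` is contained in the odds or in the evens. -/
def ParityPreserving {m : ℕ} (θ : FP m) : Prop :=
  ∀ B ∈ θ.parts, OddBlock B ∨ EvenBlock B

def OppositeParity {m : ℕ} (A B : Finset (Fin m)) : Prop :=
  (OddBlock A ∧ EvenBlock B) ∨ (EvenBlock A ∧ OddBlock B)

def SameParity {m : ℕ} (A B : Finset (Fin m)) : Prop :=
  (OddBlock A ∧ OddBlock B) ∨ (EvenBlock A ∧ EvenBlock B)

/-- `P = Parent_θ(A)` : the unique block `P ≠ A` of `θ` embracing `A` such that every
block `A' ≠ A` of `θ` embracing `A` also embraces `P`. -/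
def IsParent {m : ℕ} (θ : FP m) (A P : Finset (Fin m)) : Prop :=
  P ∈ θ.parts ∧ P ≠ A ∧ Embraces P A ∧
    ∀ A' ∈ θ.parts, A' ≠ A → Embraces A' A → Embraces A' P

/-- `θ` has exactly two outer blocks. -/
def ExactlyTwoOuterBlocks {m : ℕ} (θ : FP m) : Prop :=
  ∃ M ∈ θ.parts, ∃ N ∈ θ.parts, M ≠ N ∧ IsOuter θ M ∧ IsOuter θ N ∧
    ∀ A ∈ θ.parts, IsOuter θ A → A = M ∨ A = N

/-- A series in `ℂ₀⟨⟨z₁,…,z_k⟩⟩`, given by its family of coefficients: `f n w` is the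
coefficient of `z_{w 0} z_{w 1} ⋯ z_{w n}` (a word of length `n+1 ≥ 1`). -/
abbrev NCSeries (k : ℕ) := (n : ℕ) → (Fin (n+1) → Fin k) → ℂ

/-- The coefficient `Cf_{w|B}(f)` of the restriction of the word `w` to the set `B`,
listing the elements of `B` in increasing order.  (Equals `1` for `B = ∅`.) -/
noncomputable def partCoeff {k m : ℕ} (f : NCSeries k) (w : Fin (m+1) → Fin k)
    (B : Finset (Fin (m+1))) : ℂ :=
  if h : B.Nonempty then
    f (B.card - 1) (fun j =>
      w ((B.orderIsoOfFin (Nat.succ_pred_eq_of_pos (Finset.card_pos.mpr h)).symm j).1))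
  else 1

/-- The generalized coefficient `Cf_{w;π}(f) = ∏_{B block of π} Cf_{w|B}(f)`. -/
noncomputable def genCoeff {k m : ℕ} (f : NCSeries k) (w : Fin (m+1) → Fin k)
    (π : FP (m+1)) : ℂ :=
  ∏ B ∈ π.parts, partCoeff f w B

/-- Linear functionals on `ℂ⟨X₁,…,X_k⟩`. -/
abbrev Dist (k : ℕ) := FreeAlgebra ℂ (Fin k) →ₗ[ℂ] ℂ

/-- `μ ∈ D_alg(k)` : `μ` is normalized by `μ(1) = 1`. -/
def IsDalg {k : ℕ} (μ : Dist k) : Prop := μ 1 = 1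

/-- The moment series `M_μ`, with `(momentSeries μ) n w = μ (X_{w 0} ⋯ X_{w n})`. -/
noncomputable def momentSeries {k : ℕ} (μ : Dist k) : NCSeries k :=
  fun _ w => μ ((List.ofFn fun j => FreeAlgebra.ι ℂ (w j)).prod)

/-- `f = R_μ` : the moments of `μ` are obtained from `f` by summation over all
non-crossing partitions. -/
def IsRTransform {k : ℕ} (μ : Dist k) (f : NCSeries k) : Prop :=
  ∀ (n : ℕ) (w : Fin (n+1) → Fin k),
    momentSeries μ n w = ∑ π : FP (n+1), if IsNC π then genCoeff f w π else 0

/-- `g = η_μ` : the moments of `μ` are obtained from `g` by summation over all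
interval partitions. -/
def IsEtaSeries {k : ℕ} (μ : Dist k) (g : NCSeries k) : Prop :=
  ∀ (n : ℕ) (w : Fin (n+1) → Fin k),
    momentSeries μ n w = ∑ π : FP (n+1), if IsIntervalPartition π then genCoeff g w π else 0

/-- `μ ∈ D_c(k)` : `μ` is the joint distribution of a `k`-tuple of selfadjoint elements
with respect to a state on a unital C*-algebra. -/
def IsDc {k : ℕ} (μ : Dist k) : Prop :=
  IsDalg μ ∧
  ∃ (A : Type) (_ : NormedRing A) (_ : StarRing A) (_ : CStarRing A)
    (_ : NormedAlgebra ℂ A) (_ : StarModule ℂ A) (_ : CompleteSpace A)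
    (φ : A →ₗ[ℂ] ℂ) (x : Fin k → A),
      φ 1 = 1 ∧ (∀ a : A, 0 ≤ φ (star a * a)) ∧ (∀ i, IsSelfAdjoint (x i)) ∧
      ∀ (n : ℕ) (w : Fin (n+1) → Fin k),
        momentSeries μ n w = φ ((List.ofFn fun j => x (w j)).prod)

/-- convergence in moments. -/
def ConvInMoments {k : ℕ} (μseq : ℕ → Dist k) (μ : Dist k) : Prop :=
  ∀ P : FreeAlgebra ℂ (Fin k),
    Filter.Tendsto (fun N => μseq N P) Filter.atTop (nhds (μ P))

/-- coefficientwise convergence of series. -/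
def ConvCoeffwise {k : ℕ} (fseq : ℕ → NCSeries k) (f : NCSeries k) : Prop :=
  ∀ (n : ℕ) (w : Fin (n+1) → Fin k),
    Filter.Tendsto (fun N => fseq N n w) Filter.atTop (nhds (f n w))

/-- `ν` is the `p`-fold free additive convolution `μ ⊞ ⋯ ⊞ μ`, i.e. `R_ν = p · R_μ`. -/
def IsNFoldFree {k : ℕ} (p : ℕ) (μ ν : Dist k) : Prop :=
  ∃ f : NCSeries k, IsRTransform μ f ∧ IsRTransform ν (fun n w => (p : ℂ) * f n w)

/-- `ν` is the `p`-fold Boolean convolution `μ ⊎ ⋯ ⊎ μ`, i.e. `η_ν = p · η_μ`. -/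
def IsNFoldBool {k : ℕ} (p : ℕ) (μ ν : Dist k) : Prop :=
  ∃ g : NCSeries k, IsEtaSeries μ g ∧ IsEtaSeries ν (fun n w => (p : ℂ) * g n w)

/-- `ν = 𝔹(μ)` : the Boolean Bercovici–Pata bijection, `R_{𝔹(μ)} = η_μ`. -/
def IsBP {k : ℕ} (μ ν : Dist k) : Prop :=
  ∃ f : NCSeries k, IsEtaSeries μ f ∧ IsRTransform ν f

/-- `μ ∈ D_c(k)` is infinitely divisible with respect to `⊞`. -/
def IsInfDiv {k : ℕ} (μ : Dist k) : Prop :=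
  IsDc μ ∧ ∀ N : ℕ, 0 < N → ∃ ν : Dist k, IsDc ν ∧ IsNFoldFree N ν μ

/-- `g = Reta(f)`, i.e. there is `μ ∈ D_alg(k)` with `f = R_μ` and `g = η_μ`. -/
def RetaRel {k : ℕ} (f g : NCSeries k) : Prop :=
  ∃ μ : Dist k, IsDalg μ ∧ IsRTransform μ f ∧ IsEtaSeries μ g

/-!
Möbius inversion for `≪`. Write `S(h)` for the series with coefficients
`Cf_w(S(h)) = Σ_{ρ ∈ NC(n), ρ ≪ 1ₙ} Cf_{w;ρ}(h)`; the claim is that `f = -S(-g)`. A partition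
`ρ ≪ π` amounts to a choice of a partition `≪ 1` of each block of `π`, so
`Cf_{w;π}(S(h)) = Σ_{ρ ∈ NC(n), ρ ≪ π} Cf_{w;ρ}(h)` for non-crossing `π`. Summing over `π` gives
`Σ_π Cf_{w;π}(-S(-g)) = Σ_ρ (-1)^|ρ| Cf_{w;ρ}(g) Σ_{π ≫ ρ} (-1)^|π|`.
If `ρ` is an interval partition, the only `π ≫ ρ` is `ρ` itself. Otherwise `ρ` has an interval
block nested inside another block, and merging it with, or separating it from, the block of `π`
containing its left neighbour is a sign-reversing involution on `{π ∈ NC(n) : ρ ≪ π}`, so the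
inner sum vanishes. What remains is the moment of `μ` in terms of `η_μ`; hence `-S(-g)` satisfies
the equations that determine `R_μ`.
-/

variable {m n k : ℕ}

/-! ### Partitions as equivalence relations -/

lemma sameBlock_iff_mem_part {π : FP m} {x y : Fin m} : SameBlock π x y ↔ x ∈ π.part y :=
  (Finpartition.mem_part_iff_exists ..).symm

lemma SameBlock.refl (π : FP m) (x : Fin m) : SameBlock π x x :=
  sameBlock_iff_mem_part.2 (π.mem_part (mem_univ x))

lemma SameBlock.symm {π : FP m} {x y : Fin m} : SameBlock π x y → SameBlock π y x :=
  fun ⟨B, hB, hx, hy⟩ ↦ ⟨B, hB, hy, hx⟩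

lemma sameBlock_iff_mem {π : FP m} {B : Finset (Fin m)} (hB : B ∈ π.parts) {x y : Fin m}
    (hx : x ∈ B) : SameBlock π x y ↔ y ∈ B := by
  refine ⟨fun ⟨C, hC, hxC, hyC⟩ ↦ ?_, fun hy ↦ ⟨B, hB, hx, hy⟩⟩
  rwa [π.eq_of_mem_parts hB hC hx hxC]

lemma SameBlock.trans {π : FP m} {x y z : Fin m} (hxy : SameBlock π x y)
    (hyz : SameBlock π y z) : SameBlock π x z := by
  obtain ⟨B, hB, hy, hz⟩ := hyz
  exact ⟨B, hB, (sameBlock_iff_mem hB hy).1 hxy.symm, hz⟩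

lemma SameBlock.mem_iff {π : FP m} {B : Finset (Fin m)} {x y : Fin m} (hxy : SameBlock π x y)
    (hB : B ∈ π.parts) : x ∈ B ↔ y ∈ B :=
  ⟨fun hx ↦ (sameBlock_iff_mem hB hx).1 hxy, fun hy ↦ (sameBlock_iff_mem hB hy).1 hxy.symm⟩

/-- The equivalence relation on `Fin m` whose classes are the blocks of `π`. -/
def blockSetoid (π : FP m) : Setoid (Fin m) where
  r := SameBlock π
  iseqv := ⟨SameBlock.refl π, SameBlock.symm, SameBlock.trans⟩

lemma sameBlock_ofSetoid {s : Setoid (Fin m)} {x y : Fin m} :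
    SameBlock (Finpartition.ofSetoid s) x y ↔ s x y := by
  rw [sameBlock_iff_mem_part, Finpartition.mem_part_ofSetoid_iff_rel]
  exact ⟨s.symm, s.symm⟩

lemma mem_parts_iff {π : FP m} {B : Finset (Fin m)} :
    B ∈ π.parts ↔ ∃ x, ∀ y, y ∈ B ↔ SameBlock π x y := by
  constructor
  · intro hB
    obtain ⟨x, hx⟩ := π.nonempty_of_mem_parts hB
    exact ⟨x, fun y ↦ (sameBlock_iff_mem hB hx).symm⟩
  · rintro ⟨x, hx⟩
    obtain ⟨C, hC, hxC, -⟩ := SameBlock.refl π x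
    rwa [Finset.ext fun y ↦ (hx y).trans (sameBlock_iff_mem hC hxC)]

lemma ext_sameBlock {π ρ : FP m} (h : ∀ x y, SameBlock π x y ↔ SameBlock ρ x y) : π = ρ :=
  Finpartition.ext <| Finset.ext fun B ↦ by simp only [mem_parts_iff, h]

lemma refines_iff {π ρ : FP m} :
    Refines π ρ ↔ ∀ x y, SameBlock π x y → SameBlock ρ x y := by
  constructor
  · rintro h x y ⟨B, hB, hx, hy⟩
    obtain ⟨C, hC, hBC⟩ := h B hB
    exact ⟨C, hC, hBC hx, hBC hy⟩
  · intro h B hB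
    obtain ⟨x, hx⟩ := π.nonempty_of_mem_parts hB
    obtain ⟨C, hC, hxC, -⟩ := SameBlock.refl ρ x
    exact ⟨C, hC, fun y hy ↦ (sameBlock_iff_mem hC hxC).1 (h x y ⟨B, hB, hx, hy⟩)⟩

/-- The partition induced on the source of `φ`: points are in one block when their images are. -/
noncomputable def comap (φ : Fin n → Fin m) (π : FP m) : FP n :=
  Finpartition.ofSetoid ((blockSetoid π).comap φ)

lemma sameBlock_comap {φ : Fin n → Fin m} {π : FP m} {x y : Fin n} :
    SameBlock (comap φ π) x y ↔ SameBlock π (φ x) (φ y) :=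
  sameBlock_ofSetoid

lemma IsNC.comap {φ : Fin n → Fin m} (hφ : Monotone φ) {π : FP m} (hπ : IsNC π) :
    IsNC (comap φ π) := by
  intro a b c d hab hbc hcd hac hbd
  rw [sameBlock_comap] at *
  rcases (hφ hab.le).eq_or_lt with h | hab
  · rw [h]
    exact .refl π _
  rcases (hφ hbc.le).eq_or_lt with h | hbc
  · rwa [h]
  rcases (hφ hcd.le).eq_or_lt with h | hcd
  · rw [← h] at hbd
    exact hac.trans hbd.symm
  exact hπ _ _ _ _ hab hbc hcd hac hbd

lemma IsIntervalPartition.isNC {π : FP m} (hπ : IsIntervalPartition π) : IsNC π := by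
  rintro a b c d hab hbc - ⟨B, hB, ha, hc⟩ -
  exact ⟨B, hB, ha, hπ B hB a ha c hc b hab.le hbc.le⟩

lemma ll_iff {ρ π : FP m} :
    Ll ρ π ↔ (∀ x y, SameBlock ρ x y → SameBlock π x y) ∧
      ∀ x, ∃ a b, SameBlock ρ a b ∧ SameBlock π x a ∧ ∀ y, SameBlock π x y → a ≤ y ∧ y ≤ b := by
  rw [Ll, refines_iff]
  refine and_congr_right fun hle ↦ ⟨fun h x ↦ ?_, fun h C hC ↦ ?_⟩
  · obtain ⟨C, hC, hx, -⟩ := SameBlock.refl π x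
    obtain ⟨B, hB, a, b, ha, hb, haB, hbB⟩ := h C hC
    refine ⟨a, b, ⟨B, hB, haB, hbB⟩, ⟨C, hC, hx, ha.1⟩, fun y hy ↦ ?_⟩
    rw [sameBlock_iff_mem hC hx] at hy
    exact ⟨ha.2 y hy, hb.2 y hy⟩
  · obtain ⟨x, hx⟩ := π.nonempty_of_mem_parts hC
    obtain ⟨a, b, ⟨B, hB, ha, hb⟩, hxa, hbd⟩ := h x
    have hxb : SameBlock π x b := hxa.trans (hle _ _ ⟨B, hB, ha, hb⟩)
    simp only [sameBlock_iff_mem hC hx] at hxa hxb hbd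
    exact ⟨B, hB, a, b, ⟨hxa, fun y hy ↦ (hbd y hy).1⟩, ⟨hxb, fun y hy ↦ (hbd y hy).2⟩, ha, hb⟩

lemma sameBlock_fullPart (x y : Fin (n + 1)) : SameBlock (fullPart n) x y :=
  ⟨univ, by simp [fullPart], mem_univ x, mem_univ y⟩

lemma isNC_fullPart (n : ℕ) : IsNC (fullPart n) :=
  fun i j _ _ _ _ _ _ _ ↦ sameBlock_fullPart i j

lemma eq_fullPart_of_univ_mem_parts {π : FP (n + 1)} (hπ : univ ∈ π.parts) : π = fullPart n :=
  ext_sameBlock fun x y ↦ iff_of_true ⟨univ, hπ, mem_univ x, mem_univ y⟩ (sameBlock_fullPart x y)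

lemma ll_fullPart_iff {σ : FP (n + 1)} :
    Ll σ (fullPart n) ↔ SameBlock σ 0 (Fin.last n) := by
  simp only [ll_iff, sameBlock_fullPart, implies_true, true_and, forall_const]
  refine ⟨fun ⟨a, b, hab, hbd⟩ ↦ ?_, fun h ↦ ⟨0, Fin.last n, h, fun y ↦ ⟨y.zero_le, y.le_last⟩⟩⟩
  rwa [le_antisymm (hbd 0).1 a.zero_le, le_antisymm b.le_last (hbd (Fin.last n)).2] at hab

lemma mem_parts_comap_iff {φ : Fin n → Fin m} {π : FP m} {D : Finset (Fin n)} :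
    D ∈ (comap φ π).parts ↔ D.Nonempty ∧ ∃ E ∈ π.parts, D = univ.filter (φ · ∈ E) := by
  rw [mem_parts_iff]
  constructor
  · rintro ⟨x, hx⟩
    obtain ⟨E, hE, hxE, -⟩ := SameBlock.refl π (φ x)
    refine ⟨⟨x, (hx x).2 (.refl _ x)⟩, E, hE, Finset.ext fun y ↦ ?_⟩
    rw [hx, sameBlock_comap, sameBlock_iff_mem hE hxE, mem_filter_univ]
  · rintro ⟨⟨x, hx⟩, E, hE, rfl⟩
    rw [mem_filter_univ] at hx
    exact ⟨x, fun y ↦ by rw [sameBlock_comap, sameBlock_iff_mem hE hx, mem_filter_univ]⟩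

lemma isIntervalPartition_iff {π : FP m} :
    IsIntervalPartition π ↔ ∀ x y z, SameBlock π x z → x ≤ y → y ≤ z → SameBlock π x y :=
  ⟨fun h x y z ⟨B, hB, hx, hz⟩ hxy hyz ↦ ⟨B, hB, hx, h B hB x hx z hz y hxy hyz⟩,
    fun h B hB x hx z hz y hxy hyz ↦
      (sameBlock_iff_mem hB hx).1 (h x y z ⟨B, hB, hx, hz⟩ hxy hyz)⟩

lemma IsIntervalPartition.eq_of_ll {ρ π : FP m} (hρ : IsIntervalPartition ρ) (h : Ll ρ π) :
    π = ρ := by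
  rw [isIntervalPartition_iff] at hρ
  obtain ⟨hle, hull⟩ := ll_iff.1 h
  refine ext_sameBlock fun x y ↦ ⟨fun hxy ↦ ?_, hle x y⟩
  obtain ⟨a, b, hab, -, hbd⟩ := hull x
  have hx := hbd x (.refl π x)
  have hy := hbd y hxy
  exact (hρ a x b hab hx.1 hx.2).symm.trans (hρ a y b hab hy.1 hy.2)

lemma Ll.refl (π : FP m) : Ll π π := by
  refine ⟨fun B hB ↦ ⟨B, hB, Subset.rfl⟩, fun C hC ↦ ?_⟩
  have hne := π.nonempty_of_mem_parts hC
  exact ⟨C, hC, C.min' hne, C.max' hne, ⟨C.min'_mem hne, C.min'_le⟩, ⟨C.max'_mem hne, C.le_max'⟩,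
    C.min'_mem hne, C.max'_mem hne⟩

/-! ### Merging and separating a nested interval block -/

/-- `B` is a block of `ρ` that is an interval with first element `p`, and the block of the
immediate predecessor `i` of `p` continues to the right of `B`. Such a `B` can be merged into and
separated from the block of `i` without leaving the up-set of `ρ` for `≪`. -/
structure IsNestedBlock (ρ : FP m) (i p : Fin m) (B : Finset (Fin m)) : Prop where
  mem_parts : B ∈ ρ.parts
  mem : p ∈ B
  covBy : i ⋖ p
  notMem : i ∉ B
  mem_of_between : ∀ x ∈ B, ∀ z ∈ B, ∀ y, x ≤ y → y ≤ z → y ∈ B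
  exists_right : ∃ r, SameBlock ρ i r ∧ ∀ x ∈ B, x < r

lemma exists_shortest_gap {ρ : FP m} (hint : ¬ IsIntervalPartition ρ) :
    ∃ i y k : Fin m, i < y ∧ y < k ∧ SameBlock ρ i k ∧ ¬ SameBlock ρ i y ∧
      ∀ x z : Fin m, (z : ℕ) - x < k - i → SameBlock ρ x z →
        ∀ t, x ≤ t → t ≤ z → SameBlock ρ x t := by
  let gap : Set (Fin m × Fin m) :=
    {q | SameBlock ρ q.1 q.2 ∧ ∃ y, q.1 ≤ y ∧ y ≤ q.2 ∧ ¬ SameBlock ρ q.1 y}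
  have hgap : gap.Nonempty := by
    simp only [isIntervalPartition_iff, not_forall] at hint
    obtain ⟨x, y, z, hxz, hxy, hyz, hnot⟩ := hint
    exact ⟨(x, z), hxz, y, hxy, hyz, hnot⟩
  obtain ⟨⟨i, k⟩, ⟨hik, y, hiy, hyk, hy⟩, hmin⟩ :=
    Set.exists_min_image gap (fun q ↦ (q.2 : ℕ) - q.1) gap.toFinite hgap
  refine ⟨i, y, k, hiy.lt_of_ne ?_, hyk.lt_of_ne ?_, hik, hy, fun x z hlt hxz t hxt htz ↦ ?_⟩
  · rintro rfl
    exact hy (.refl ρ i)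
  · rintro rfl
    exact hy hik
  · exact by_contra fun h ↦ (hmin (x, z) ⟨hxz, t, hxt, htz, h⟩).not_gt hlt

lemma IsNC.lt_and_lt_of_sameBlock {ρ : FP m} (hρ : IsNC ρ) {i p k x : Fin m} (hip : i < p)
    (hpk : p < k) (hik : SameBlock ρ i k) (hnot : ¬ SameBlock ρ i p) (hpx : SameBlock ρ p x) :
    i < x ∧ x < k := by
  constructor
  · by_contra! hxi
    rcases hxi.eq_or_lt with rfl | hxi
    · exact hnot hpx.symm
    · exact hnot ((hρ x i p k hxi hip hpk hpx.symm hik).symm.trans hpx.symm)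
  · by_contra! hkx
    rcases hkx.eq_or_lt with rfl | hkx
    · exact hnot (hik.trans hpx.symm)
    · exact hnot (hρ i p k x hip hpk hkx hik hpx)

lemma IsNC.exists_isNestedBlock {ρ : FP m} (hρ : IsNC ρ) (hint : ¬ IsIntervalPartition ρ) :
    ∃ i p B, IsNestedBlock ρ i p B := by
  obtain ⟨i, y, k, hiy, hyk, hik, hy, hmin⟩ := exists_shortest_gap hint
  obtain ⟨p, hip, hpy⟩ := exists_covBy_le_of_lt hiy
  have hpk : p < k := hpy.trans_lt hyk
  have hnot : ¬ SameBlock ρ i p := fun h ↦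
    hy (h.trans (hmin p k (by have := hip.lt; omega) (h.symm.trans hik) y hpy hyk.le))
  obtain ⟨B, hB, hpB, -⟩ := SameBlock.refl ρ p
  have hinside (x : Fin m) (hx : x ∈ B) : i < x ∧ x < k :=
    hρ.lt_and_lt_of_sameBlock hip.lt hpk hik hnot ⟨B, hB, hpB, hx⟩
  refine ⟨i, p, B, hB, hpB, hip, fun h ↦ (hinside i h).1.false, fun x hx z hz y hxy hyz ↦ ?_,
    k, hik, fun x hx ↦ (hinside x hx).2⟩
  have hix := (hinside x hx).1
  have hzk := (hinside z hz).2
  exact (sameBlock_iff_mem hB hx).1 (hmin x z (by omega) ⟨B, hB, hx, hz⟩ y hxy hyz)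

/-- The map sending `B` to `i` and fixing all other points. -/
noncomputable def collapse (B : Finset (Fin m)) (i x : Fin m) : Fin m :=
  if x ∈ B then i else x

lemma collapse_of_mem {B : Finset (Fin m)} {i x : Fin m} (hx : x ∈ B) : collapse B i x = i :=
  if_pos hx

lemma collapse_of_notMem {B : Finset (Fin m)} {i x : Fin m} (hx : x ∉ B) : collapse B i x = x :=
  if_neg hx

lemma collapse_notMem {B : Finset (Fin m)} {i : Fin m} (hi : i ∉ B) (x : Fin m) :
    collapse B i x ∉ B := by
  unfold collapse
  split_ifs with hx
  exacts [hi, hx]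

/-- The partition obtained from `π` by moving the points of `B` into the block of `i`. -/
noncomputable def absorb (B : Finset (Fin m)) (i : Fin m) (π : FP m) : FP m :=
  comap (collapse B i) π

/-- The partition obtained from `π` by cutting every block along `B`. -/
noncomputable def splitOff (B : Finset (Fin m)) (π : FP m) : FP m :=
  Finpartition.ofSetoid (blockSetoid π ⊓ Setoid.ker (· ∈ B))

lemma sameBlock_splitOff {B : Finset (Fin m)} {π : FP m} {x y : Fin m} :
    SameBlock (splitOff B π) x y ↔ SameBlock π x y ∧ (x ∈ B ↔ y ∈ B) := by
  rw [splitOff, sameBlock_ofSetoid, Setoid.inf_iff_and, Setoid.ker_def, eq_iff_iff]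
  rfl

lemma sameBlock_absorb {B : Finset (Fin m)} {i : Fin m} {π : FP m} {x y : Fin m} :
    SameBlock (absorb B i π) x y ↔ SameBlock π (collapse B i x) (collapse B i y) :=
  sameBlock_comap

lemma SameBlock.absorb {B : Finset (Fin m)} {i : Fin m} {π : FP m} {x y : Fin m}
    (hxy : SameBlock π x y) (hmem : x ∈ B ↔ y ∈ B) : SameBlock (absorb B i π) x y := by
  rw [sameBlock_absorb]
  by_cases hx : x ∈ B
  · rw [collapse_of_mem hx, collapse_of_mem (hmem.1 hx)]
    exact .refl π i
  · rwa [collapse_of_notMem hx, collapse_of_notMem (mt hmem.2 hx)]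

namespace IsNestedBlock

variable {ρ π : FP m} {i p : Fin m} {B : Finset (Fin m)}

lemma lt_of_mem (h : IsNestedBlock ρ i p B) {x : Fin m} (hx : x ∈ B) : i < x := by
  by_contra! hxi
  exact h.notMem (h.mem_of_between x hx p h.mem i hxi h.covBy.lt.le)

lemma le_of_mem (h : IsNestedBlock ρ i p B) {x : Fin m} (hx : x ∈ B) : p ≤ x :=
  h.covBy.ge_of_gt (h.lt_of_mem hx)

lemma sameBlock (h : IsNestedBlock ρ i p B) (hρπ : Ll ρ π) {x y : Fin m} (hx : x ∈ B)
    (hy : y ∈ B) : SameBlock π x y :=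
  (ll_iff.1 hρπ).1 x y ⟨B, h.mem_parts, hx, hy⟩

lemma monotone_collapse (h : IsNestedBlock ρ i p B) : Monotone (collapse B i) := by
  intro x y hxy
  by_cases hx : x ∈ B <;> by_cases hy : y ∈ B
  · rw [collapse_of_mem hx, collapse_of_mem hy]
  · rw [collapse_of_mem hx, collapse_of_notMem hy]
    exact (h.lt_of_mem hx).le.trans hxy
  · rw [collapse_of_notMem hx, collapse_of_mem hy]
    by_contra! hix
    exact hx (h.mem_of_between p h.mem y hy x (h.covBy.ge_of_gt hix) hxy)
  · rwa [collapse_of_notMem hx, collapse_of_notMem hy]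

lemma isNC_absorb (h : IsNestedBlock ρ i p B) (hπ : IsNC π) : IsNC (absorb B i π) :=
  hπ.comap h.monotone_collapse

lemma isNC_splitOff (h : IsNestedBlock ρ i p B) (hπ : IsNC π) : IsNC (splitOff B π) := by
  intro a b c d hab hbc hcd hac hbd
  rw [sameBlock_splitOff] at *
  refine ⟨hπ a b c d hab hbc hcd hac.1 hbd.1, fun ha ↦ ?_, fun hb ↦ ?_⟩
  · exact h.mem_of_between a ha c (hac.2.1 ha) b hab.le hbc.le
  · exact hac.2.2 (h.mem_of_between b hb d (hbd.2.1 hb) c hbc.le hcd.le)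

lemma ll_absorb (h : IsNestedBlock ρ i p B) (hρπ : Ll ρ π) : Ll ρ (absorb B i π) := by
  obtain ⟨hle, hull⟩ := ll_iff.1 hρπ
  refine ll_iff.2 ⟨fun x y hxy ↦ (hle x y hxy).absorb (hxy.mem_iff h.mem_parts), fun x ↦ ?_⟩
  obtain ⟨a, b, hab, hxa, hbd⟩ := hull (collapse B i x)
  have ha : a ∉ B := fun ha ↦ by
    have hx := hbd _ (.refl π _)
    exact collapse_notMem h.notMem x
      (h.mem_of_between a ha b ((hab.mem_iff h.mem_parts).1 ha) _ hx.1 hx.2)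
  refine ⟨a, b, hab, by rwa [sameBlock_absorb, collapse_of_notMem ha], fun y hy ↦ ?_⟩
  rw [sameBlock_absorb] at hy
  by_cases hyB : y ∈ B
  · obtain ⟨r, hir, hr⟩ := h.exists_right
    rw [collapse_of_mem hyB] at hy
    exact ⟨(hbd i hy).1.trans (h.lt_of_mem hyB).le,
      (hr y hyB).le.trans (hbd r (hy.trans (hle i r hir))).2⟩
  · rw [collapse_of_notMem hyB] at hy
    exact hbd y hy

lemma ll_splitOff (h : IsNestedBlock ρ i p B) (hρπ : Ll ρ π) : Ll ρ (splitOff B π) := by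
  obtain ⟨hle, hull⟩ := ll_iff.1 hρπ
  refine ll_iff.2 ⟨fun x y hxy ↦ sameBlock_splitOff.2 ⟨hle x y hxy, hxy.mem_iff h.mem_parts⟩,
    fun x ↦ ?_⟩
  simp only [sameBlock_splitOff]
  by_cases hx : x ∈ B
  · have hmax := B.max'_mem ⟨x, hx⟩
    refine ⟨p, B.max' ⟨x, hx⟩, ⟨B, h.mem_parts, h.mem, hmax⟩,
      ⟨h.sameBlock hρπ hx h.mem, by simp only [hx, h.mem]⟩, fun y hy ↦ ?_⟩
    have hyB := hy.2.1 hx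
    exact ⟨h.le_of_mem hyB, B.le_max' y hyB⟩
  · obtain ⟨a, b, hab, hxa, hbd⟩ := hull x
    have ha : a ∉ B := fun ha ↦ by
      have hx' := hbd x (.refl π x)
      exact hx (h.mem_of_between a ha b ((hab.mem_iff h.mem_parts).1 ha) x hx'.1 hx'.2)
    exact ⟨a, b, hab, ⟨hxa, by simp only [hx, ha]⟩, fun y hy ↦ hbd y hy.1⟩

lemma sameBlock_absorb_self (h : IsNestedBlock ρ i p B) : SameBlock (absorb B i π) i p := by
  rw [sameBlock_absorb, collapse_of_mem h.mem, collapse_of_notMem h.notMem]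
  exact .refl π i

lemma not_sameBlock_splitOff (h : IsNestedBlock ρ i p B) : ¬ SameBlock (splitOff B π) i p :=
  fun hip ↦ h.notMem ((sameBlock_splitOff.1 hip).2.2 h.mem)

lemma mem_parts_of_not_sameBlock (h : IsNestedBlock ρ i p B) (hπ : IsNC π) (hρπ : Ll ρ π)
    (hip : ¬ SameBlock π i p) : B ∈ π.parts := by
  refine mem_parts_iff.2 ⟨p, fun y ↦ ⟨fun hy ↦ h.sameBlock hρπ h.mem hy, fun hpy ↦ ?_⟩⟩
  by_contra hy
  obtain ⟨hle, hull⟩ := ll_iff.1 hρπ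
  obtain ⟨a, b, hab, hpa, hbd⟩ := hull p
  have ha : a ∉ B := fun ha ↦
    hy (h.mem_of_between a ha b ((hab.mem_iff h.mem_parts).1 ha) y (hbd y hpy).1 (hbd y hpy).2)
  have hap : a < p := (hbd p (.refl π p)).1.lt_of_ne (by rintro rfl; exact ha h.mem)
  rcases (h.covBy.le_of_lt hap).eq_or_lt with rfl | hai
  · exact hip hpa.symm
  · obtain ⟨r, hir, hr⟩ := h.exists_right
    have hai_same : SameBlock π a i :=
      hπ a i p r hai h.covBy.lt (hr p h.mem) hpa.symm (hle i r hir)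
    exact hip (hpa.trans hai_same).symm

lemma absorb_splitOff (h : IsNestedBlock ρ i p B) (hρπ : Ll ρ π) (hip : SameBlock π i p) :
    absorb B i (splitOff B π) = π := by
  have hcollapse (x : Fin m) : SameBlock π x (collapse B i x) := by
    by_cases hx : x ∈ B
    · rw [collapse_of_mem hx]
      exact (h.sameBlock hρπ hx h.mem).trans hip.symm
    · rw [collapse_of_notMem hx]
      exact .refl π x
  refine ext_sameBlock fun x y ↦ ?_
  simp only [sameBlock_absorb, sameBlock_splitOff, collapse_notMem h.notMem, and_true]
  exact ⟨fun hxy ↦ (hcollapse x).trans (hxy.trans (hcollapse y).symm),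
    fun hxy ↦ (hcollapse x).symm.trans (hxy.trans (hcollapse y))⟩

end IsNestedBlock

lemma splitOff_absorb {π : FP m} {B : Finset (Fin m)} (hB : B ∈ π.parts) (i : Fin m) :
    splitOff B (absorb B i π) = π := by
  refine ext_sameBlock fun x y ↦ ?_
  rw [sameBlock_splitOff]
  refine ⟨fun ⟨hxy, hmem⟩ ↦ ?_, fun hxy ↦ ⟨hxy.absorb (hxy.mem_iff hB), hxy.mem_iff hB⟩⟩
  by_cases hx : x ∈ B
  · exact ⟨B, hB, hx, hmem.1 hx⟩
  · rwa [sameBlock_absorb, collapse_of_notMem hx, collapse_of_notMem (mt hmem.2 hx)] at hxy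

lemma card_parts_absorb {π : FP m} {B : Finset (Fin m)} (hB : B ∈ π.parts) {i : Fin m}
    (hi : i ∉ B) : (absorb B i π).parts.card + 1 = π.parts.card := by
  have hfix {E} (hE : E ∈ π.parts.erase B) {x : Fin m} (hx : x ∈ E) : collapse B i x = x :=
    collapse_of_notMem fun hxB ↦
      (mem_erase.1 hE).1 (π.eq_of_mem_parts (mem_erase.1 hE).2 hB hx hxB)
  have hparts : (absorb B i π).parts =
      (π.parts.erase B).image fun E ↦ univ.filter (collapse B i · ∈ E) := by
    ext D
    simp only [absorb, mem_parts_comap_iff, mem_image]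
    constructor
    · rintro ⟨⟨x, hx⟩, E, hE, rfl⟩
      refine ⟨E, mem_erase.2 ⟨?_, hE⟩, rfl⟩
      rintro rfl
      exact collapse_notMem hi x ((mem_filter_univ x).1 hx)
    · rintro ⟨E, hE, rfl⟩
      obtain ⟨x, hx⟩ := π.nonempty_of_mem_parts (mem_erase.1 hE).2
      exact ⟨⟨x, (mem_filter_univ x).2 (by rwa [hfix hE hx])⟩, E, (mem_erase.1 hE).2, rfl⟩
  rw [hparts, card_image_of_injOn, card_erase_add_one hB]
  intro E hE E' hE' heq
  obtain ⟨x, hx⟩ := π.nonempty_of_mem_parts (mem_erase.1 hE).2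
  have hx' : x ∈ univ.filter (collapse B i · ∈ E) := (mem_filter_univ x).2 (by rwa [hfix hE hx])
  rw [show univ.filter (collapse B i · ∈ E) = univ.filter (collapse B i · ∈ E') from heq,
    mem_filter_univ, hfix hE hx] at hx'
  exact π.eq_of_mem_parts (mem_erase.1 hE).2 (mem_erase.1 hE').2 hx hx'

section SignedSum

variable {R : Type*} [Ring R]

lemma IsNestedBlock.sum_neg_one_pow_card_parts_eq_zero {ρ : FP m} {i p : Fin m} {B : Finset (Fin m)}
    (h : IsNestedBlock ρ i p B) :
    ∑ π : FP m with IsNC π ∧ Ll ρ π, (-1 : R) ^ π.parts.card = 0 := by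
  rw [← sum_filter_add_sum_filter_not _ (SameBlock · i p), ← eq_neg_iff_add_eq_zero,
    ← sum_neg_distrib]
  simp only [filter_filter]
  refine sum_nbij' (splitOff B) (absorb B i) ?_ ?_ ?_ ?_ ?_ <;>
    simp only [mem_filter_univ, and_imp]
  · exact fun π hπ hρπ _ ↦ ⟨⟨h.isNC_splitOff hπ, h.ll_splitOff hρπ⟩, h.not_sameBlock_splitOff⟩
  · exact fun π hπ hρπ _ ↦ ⟨⟨h.isNC_absorb hπ, h.ll_absorb hρπ⟩, h.sameBlock_absorb_self⟩
  · exact fun π _ hρπ hip ↦ h.absorb_splitOff hρπ hip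
  · exact fun π hπ hρπ hip ↦ splitOff_absorb (h.mem_parts_of_not_sameBlock hπ hρπ hip) i
  · intro π hπ hρπ hip
    have hB : B ∈ (splitOff B π).parts :=
      h.mem_parts_of_not_sameBlock (h.isNC_splitOff hπ) (h.ll_splitOff hρπ)
        h.not_sameBlock_splitOff
    rw [← card_parts_absorb hB h.notMem, h.absorb_splitOff hρπ hip, pow_succ, mul_neg_one, neg_neg]

lemma sum_neg_one_pow_card_parts_of_ll {ρ : FP m} (hρ : IsNC ρ) :
    ∑ π : FP m with IsNC π ∧ Ll ρ π, (-1 : R) ^ π.parts.card =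
      if IsIntervalPartition ρ then (-1) ^ ρ.parts.card else 0 := by
  split_ifs with hint
  · refine sum_eq_single_of_mem ρ ((mem_filter_univ _).2 ⟨hρ, .refl ρ⟩) fun π hπ hne ↦ ?_
    exact absurd (hint.eq_of_ll ((mem_filter_univ _).1 hπ).2) hne
  · obtain ⟨i, p, B, h⟩ := hρ.exists_isNestedBlock hint
    exact h.sum_neg_one_pow_card_parts_eq_zero

end SignedSum

/-! ### Partitioning each block of a partition -/

/-- The increasing enumeration of the block `B` of `π`. -/
noncomputable def enum {π : FP m} (B : π.parts) : Fin (B.1.card - 1 + 1) ↪o Fin m :=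
  B.1.orderEmbOfFin (Nat.sub_add_cancel (π.nonempty_of_mem_parts B.2).card_pos).symm

section Glue

variable {π : FP m}

lemma enum_mem (B : π.parts) (i : Fin (B.1.card - 1 + 1)) : enum B i ∈ B.1 :=
  orderEmbOfFin_mem ..

lemma exists_enum_eq {B : π.parts} {x : Fin m} (hx : x ∈ B.1) : ∃ i, enum B i = x := by
  rwa [← Set.mem_range, enum, range_orderEmbOfFin]

lemma exists_block_enum_eq (π : FP m) (x : Fin m) : ∃ (B : π.parts) (i : _), enum B i = x := by
  obtain ⟨B, hB, hx, -⟩ := SameBlock.refl π x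
  exact ⟨⟨B, hB⟩, exists_enum_eq hx⟩

lemma sameBlock_enum {B B' : π.parts} {i : Fin (B.1.card - 1 + 1)} {j : Fin (B'.1.card - 1 + 1)} :
    SameBlock π (enum B i) (enum B' j) ↔ B = B' := by
  rw [sameBlock_iff_mem B.2 (enum_mem B i)]
  constructor
  · exact fun h ↦ Subtype.ext (π.eq_of_mem_parts B.2 B'.2 h (enum_mem B' j))
  · rintro rfl
    exact enum_mem B j

lemma eq_of_enum_eq {B B' : π.parts} {i : Fin (B.1.card - 1 + 1)}
    {j : Fin (B'.1.card - 1 + 1)} (h : enum B i = enum B' j) : B = B' := by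
  rw [← sameBlock_enum (i := i) (j := j), h]
  exact .refl π _

/-- The equivalence relation on `Fin m` whose restriction to each block `B` of `π` is given by
`σ B`, through the enumeration of `B`. -/
def glueSetoid (σ : ∀ B : π.parts, FP (B.1.card - 1 + 1)) : Setoid (Fin m) where
  r x y := ∃ B i j, enum B i = x ∧ enum B j = y ∧ SameBlock (σ B) i j
  iseqv := by
    refine ⟨fun x ↦ ?_, ?_, ?_⟩
    · obtain ⟨B, i, rfl⟩ := exists_block_enum_eq π x
      exact ⟨B, i, i, rfl, rfl, .refl _ i⟩
    · rintro _ _ ⟨B, i, j, rfl, rfl, hij⟩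
      exact ⟨B, j, i, rfl, rfl, hij.symm⟩
    · rintro _ _ _ ⟨B, i, j, rfl, rfl, hij⟩ ⟨B', j', l, hj, rfl, hjl⟩
      obtain rfl := eq_of_enum_eq hj
      obtain rfl := (enum B').injective hj
      exact ⟨B', i, l, rfl, rfl, hij.trans hjl⟩

/-- The refinement of `π` in which each block `B` is partitioned according to `σ B`, through the
enumeration of `B`. -/
noncomputable def glue (σ : ∀ B : π.parts, FP (B.1.card - 1 + 1)) : FP m :=
  Finpartition.ofSetoid (glueSetoid σ)

variable {σ : ∀ B : π.parts, FP (B.1.card - 1 + 1)}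

lemma sameBlock_glue {x y : Fin m} :
    SameBlock (glue σ) x y ↔ ∃ B i j, enum B i = x ∧ enum B j = y ∧ SameBlock (σ B) i j :=
  sameBlock_ofSetoid

lemma sameBlock_glue_enum {B : π.parts} {i j : Fin (B.1.card - 1 + 1)} :
    SameBlock (glue σ) (enum B i) (enum B j) ↔ SameBlock (σ B) i j := by
  refine sameBlock_glue.trans ⟨?_, fun h ↦ ⟨B, i, j, rfl, rfl, h⟩⟩
  rintro ⟨B', i', j', hi, hj, h⟩
  obtain rfl := eq_of_enum_eq hi
  rwa [← (enum B').injective hi, ← (enum B').injective hj]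

lemma comap_enum_glue (σ : ∀ B : π.parts, FP (B.1.card - 1 + 1)) (B : π.parts) :
    comap (enum B) (glue σ) = σ B :=
  ext_sameBlock fun _ _ ↦ sameBlock_comap.trans sameBlock_glue_enum

lemma glue_comap_enum {ρ : FP m} (h : ∀ x y, SameBlock ρ x y → SameBlock π x y) :
    glue (fun B : π.parts ↦ comap (enum B) ρ) = ρ := by
  refine ext_sameBlock fun x y ↦ ?_
  simp only [sameBlock_glue, sameBlock_comap]
  constructor
  · rintro ⟨B, i, j, rfl, rfl, hij⟩
    exact hij
  · intro hxy
    obtain ⟨B, hB, hx, hy⟩ := h x y hxy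
    obtain ⟨i, rfl⟩ := exists_enum_eq (B := ⟨B, hB⟩) hx
    obtain ⟨j, rfl⟩ := exists_enum_eq (B := ⟨B, hB⟩) hy
    exact ⟨⟨B, hB⟩, i, j, rfl, rfl, hxy⟩

lemma SameBlock.of_glue {x y : Fin m} (h : SameBlock (glue σ) x y) : SameBlock π x y := by
  obtain ⟨B, i, j, rfl, rfl, -⟩ := sameBlock_glue.1 h
  exact sameBlock_enum.2 rfl

lemma IsNC.glue (hπ : IsNC π) (hσ : ∀ B, IsNC (σ B)) : IsNC (glue σ) := by
  intro a b c d hab hbc hcd hac hbd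
  have h := hπ a b c d hab hbc hcd hac.of_glue hbd.of_glue
  obtain ⟨B, i, k, rfl, rfl, hik⟩ := sameBlock_glue.1 hac
  obtain ⟨B', j, l, rfl, rfl, hjl⟩ := sameBlock_glue.1 hbd
  obtain rfl := sameBlock_enum.1 h
  rw [OrderEmbedding.lt_iff_lt] at hab hbc hcd
  exact sameBlock_glue_enum.2 (hσ B i j k l hab hbc hcd hik hjl)

lemma ll_iff_forall_comap_enum {ρ : FP m} :
    Ll ρ π ↔ (∀ x y, SameBlock ρ x y → SameBlock π x y) ∧
      ∀ B : π.parts, Ll (comap (enum B) ρ) (fullPart _) := by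
  simp only [ll_iff (π := π), ll_fullPart_iff, sameBlock_comap]
  refine and_congr_right fun hle ↦ ⟨fun hull B ↦ ?_, fun h x ↦ ?_⟩
  · obtain ⟨a, b, hab, hBa, hbd⟩ := hull (enum B 0)
    have hBb := hBa.trans (hle a b hab)
    rw [sameBlock_iff_mem B.2 (enum_mem B 0)] at hBa hBb
    obtain ⟨i, rfl⟩ := exists_enum_eq hBa
    obtain ⟨j, rfl⟩ := exists_enum_eq hBb
    have hi := (hbd _ (sameBlock_enum.2 rfl : SameBlock π _ (enum B 0))).1
    have hj := (hbd _ (sameBlock_enum.2 rfl : SameBlock π _ (enum B (Fin.last _)))).2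
    rw [OrderEmbedding.le_iff_le] at hi hj
    rwa [le_antisymm hi i.zero_le, le_antisymm j.le_last hj] at hab
  · obtain ⟨B, i, rfl⟩ := exists_block_enum_eq π x
    refine ⟨_, _, h B, sameBlock_enum.2 rfl, fun y hy ↦ ?_⟩
    obtain ⟨j, rfl⟩ := exists_enum_eq ((sameBlock_iff_mem B.2 (enum_mem B i)).1 hy)
    exact ⟨(enum B).monotone j.zero_le, (enum B).monotone j.le_last⟩

lemma map_enum_mem_parts_glue {B : π.parts} {C : Finset (Fin (B.1.card - 1 + 1))}
    (hC : C ∈ (σ B).parts) : C.map (enum B).toEmbedding ∈ (glue σ).parts := by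
  obtain ⟨i, hi⟩ := (σ B).nonempty_of_mem_parts hC
  refine mem_parts_iff.2 ⟨enum B i, fun y ↦ ?_⟩
  rw [mem_map]
  constructor
  · rintro ⟨j, hj, rfl⟩
    exact sameBlock_glue_enum.2 ⟨C, hC, hi, hj⟩
  · intro hy
    obtain ⟨j, rfl⟩ := exists_enum_eq ((sameBlock_iff_mem B.2 (enum_mem B i)).1 hy.of_glue)
    exact ⟨j, (sameBlock_iff_mem hC hi).1 (sameBlock_glue_enum.1 hy), rfl⟩

lemma mem_parts_glue {D : Finset (Fin m)} :
    D ∈ (glue σ).parts ↔ ∃ B, ∃ C ∈ (σ B).parts, C.map (enum B).toEmbedding = D := by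
  refine ⟨fun hD ↦ ?_, fun ⟨B, C, hC, hD⟩ ↦ hD ▸ map_enum_mem_parts_glue hC⟩
  obtain ⟨x, hx⟩ := (glue σ).nonempty_of_mem_parts hD
  obtain ⟨B, i, rfl⟩ := exists_block_enum_eq π x
  obtain ⟨C, hC, hi, -⟩ := SameBlock.refl (σ B) i
  exact ⟨B, C, hC, (glue σ).eq_of_mem_parts (map_enum_mem_parts_glue hC) hD
    (mem_map_of_mem _ hi) hx⟩

lemma prod_parts_glue {M : Type*} [CommMonoid M] (σ : ∀ B : π.parts, FP (B.1.card - 1 + 1))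
    (ψ : Finset (Fin m) → M) :
    ∏ D ∈ (glue σ).parts, ψ D = ∏ B, ∏ C ∈ (σ B).parts, ψ (C.map (enum B).toEmbedding) := by
  have hparts : (glue σ).parts =
      univ.biUnion fun B ↦ (σ B).parts.map (mapEmbedding (enum B).toEmbedding).toEmbedding := by
    ext D
    simp [mem_parts_glue]
  rw [hparts, prod_biUnion]
  · simp only [prod_map]
    rfl
  · intro B _ B' _ hne
    simp only [Function.onFun, Finset.disjoint_left, mem_map, RelEmbedding.coe_toEmbedding,
      mapEmbedding_apply]
    rintro _ ⟨C, hC, rfl⟩ ⟨C', -, heq⟩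
    obtain ⟨i, hi⟩ := (σ B).nonempty_of_mem_parts hC
    have hmem := mem_map_of_mem (enum B).toEmbedding hi
    rw [← heq, mem_map] at hmem
    obtain ⟨j, -, hj⟩ := hmem
    exact hne (eq_of_enum_eq hj).symm

end Glue

/-! ### Generalized coefficients -/

section Coefficients

variable (f g : NCSeries k) (w : Fin (m + 1) → Fin k)

lemma partCoeff_eq_of_card {B : Finset (Fin (m + 1))} (hB : B.card = n + 1) :
    partCoeff f w B = f n (w ∘ B.orderEmbOfFin hB) := by
  obtain rfl : n = B.card - 1 := by omega
  exact dif_pos (card_pos.1 (by omega))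

lemma partCoeff_map {C : Finset (Fin (n + 1))} (hC : C.Nonempty) (e : Fin (n + 1) ↪o Fin (m + 1)) :
    partCoeff f w (C.map e.toEmbedding) = partCoeff f (w ∘ e) C := by
  have hcard : C.card = C.card - 1 + 1 := (Nat.sub_add_cancel hC.card_pos).symm
  have hcard' := (card_map e.toEmbedding (s := C)).trans hcard
  rw [partCoeff_eq_of_card f w hcard', partCoeff_eq_of_card f (w ∘ e) hcard]
  have henum : (C.orderEmbOfFin hcard).trans e = (C.map e.toEmbedding).orderEmbOfFin hcard' :=
    orderEmbOfFin_unique' hcard' fun i ↦ mem_map_of_mem _ (orderEmbOfFin_mem ..)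
  rw [← henum]
  rfl

lemma genCoeff_neg (π : FP (m + 1)) :
    genCoeff (-g) w π = (-1) ^ π.parts.card * genCoeff g w π := by
  rw [genCoeff, genCoeff, ← prod_const, ← prod_mul_distrib]
  refine prod_congr rfl fun B hB ↦ ?_
  have hcard := (Nat.sub_add_cancel (π.nonempty_of_mem_parts hB).card_pos).symm
  rw [partCoeff_eq_of_card _ w hcard, partCoeff_eq_of_card _ w hcard, neg_one_mul]
  rfl

lemma genCoeff_glue {π : FP (m + 1)} (σ : ∀ B : π.parts, FP (B.1.card - 1 + 1)) :
    genCoeff f w (glue σ) = ∏ B, genCoeff f (w ∘ enum B) (σ B) := by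
  simp only [genCoeff, prod_parts_glue]
  exact prod_congr rfl fun B _ ↦ prod_congr rfl fun C hC ↦
    partCoeff_map f w ((σ B).nonempty_of_mem_parts hC) (enum B)

/-- The series whose coefficients are the sums of the generalized coefficients of `f` over all
non-crossing partitions `ρ ≪ 1ₙ`, that is, those having `1` and `n` in one block. -/
noncomputable def irreducibleSum : NCSeries k := fun n w ↦
  ∑ ρ : FP (n + 1) with IsNC ρ ∧ Ll ρ (fullPart n), genCoeff f w ρ

lemma genCoeff_irreducibleSum {π : FP (m + 1)} (hπ : IsNC π) :
    genCoeff (irreducibleSum f) w π = ∑ ρ : FP (m + 1) with IsNC ρ ∧ Ll ρ π, genCoeff f w ρ := by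
  have hblocks : genCoeff (irreducibleSum f) w π =
      ∏ B : π.parts, irreducibleSum f _ (w ∘ enum B) := by
    rw [genCoeff, ← prod_coe_sort]
    exact prod_congr rfl fun B _ ↦ partCoeff_eq_of_card ..
  simp only [hblocks, irreducibleSum, prod_univ_sum, ← genCoeff_glue]
  refine sum_nbij' glue (fun ρ B ↦ comap (enum B) ρ) ?_ ?_ ?_ ?_ fun _ _ ↦ rfl
  · intro σ hσ
    simp only [Fintype.mem_piFinset, mem_filter_univ] at hσ ⊢
    refine ⟨hπ.glue fun B ↦ (hσ B).1, ll_iff_forall_comap_enum.2 ⟨fun x y ↦ .of_glue, fun B ↦ ?_⟩⟩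
    rw [comap_enum_glue]
    exact (hσ B).2
  · intro ρ hρ
    simp only [Fintype.mem_piFinset, mem_filter_univ] at hρ ⊢
    exact fun B ↦ ⟨hρ.1.comap (enum B).monotone, (ll_iff_forall_comap_enum.1 hρ.2).2 B⟩
  · exact fun σ _ ↦ funext (comap_enum_glue σ)
  · exact fun ρ hρ ↦ glue_comap_enum (ll_iff_forall_comap_enum.1 ((mem_filter_univ ρ).1 hρ).2).1

lemma sum_isNC_genCoeff_neg_irreducibleSum_neg :
    ∑ π : FP (m + 1) with IsNC π, genCoeff (-irreducibleSum (-g)) w π =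
      ∑ ρ : FP (m + 1) with IsIntervalPartition ρ, genCoeff g w ρ :=
  calc
    _ = ∑ π : FP (m + 1) with IsNC π, ∑ ρ : FP (m + 1) with IsNC ρ ∧ Ll ρ π,
          (-1) ^ π.parts.card * genCoeff (-g) w ρ :=
      sum_congr rfl fun π hπ ↦ by
        rw [genCoeff_neg, genCoeff_irreducibleSum _ _ ((mem_filter_univ π).1 hπ), mul_sum]
    _ = ∑ ρ : FP (m + 1) with IsNC ρ, ∑ π : FP (m + 1) with IsNC π ∧ Ll ρ π,
          (-1) ^ π.parts.card * genCoeff (-g) w ρ :=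
      sum_comm' fun π ρ ↦ by simp only [mem_filter_univ]; tauto
    _ = ∑ ρ : FP (m + 1) with IsNC ρ, if IsIntervalPartition ρ then genCoeff g w ρ else 0 :=
      sum_congr rfl fun ρ hρ ↦ by
        rw [← sum_mul, sum_neg_one_pow_card_parts_of_ll ((mem_filter_univ ρ).1 hρ), genCoeff_neg]
        split_ifs
        · rw [← mul_assoc, ← mul_pow, neg_one_mul, neg_neg, one_pow, one_mul]
        · rw [zero_mul]
    _ = _ := by
      rw [← sum_filter, filter_filter]
      exact sum_congr (filter_congr fun ρ _ ↦ and_iff_right_of_imp IsIntervalPartition.isNC)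
        fun _ _ ↦ rfl

variable {f g}

lemma genCoeff_fullPart (f : NCSeries k) (w : Fin (n + 1) → Fin k) :
    genCoeff f w (fullPart n) = f n w := by
  have hcard : (univ : Finset (Fin (n + 1))).card = n + 1 := by simp
  have henum : RelEmbedding.refl (· ≤ ·) = univ.orderEmbOfFin hcard :=
    orderEmbOfFin_unique' hcard fun i ↦ mem_univ _
  rw [genCoeff, fullPart, Finpartition.indiscrete_parts, prod_singleton,
    partCoeff_eq_of_card f w hcard, ← henum]
  rfl

lemma eq_of_sum_isNC_genCoeff_eq
    (h : ∀ (n : ℕ) (w : Fin (n + 1) → Fin k),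
      ∑ π : FP (n + 1) with IsNC π, genCoeff f w π =
        ∑ π : FP (n + 1) with IsNC π, genCoeff g w π) :
    f = g := by
  ext n w
  induction n using Nat.strong_induction_on with | _ n ih
  have hproper : ∀ π ∈ ({π | IsNC π} : Finset (FP (n + 1))).erase (fullPart n),
      genCoeff f w π = genCoeff g w π := by
    intro π hπ
    refine prod_congr rfl fun B hB ↦ ?_
    have hlt : B.card < n + 1 := by
      refine ((card_lt_iff_ne_univ B).2 ?_).trans_eq (Fintype.card_fin _)
      rintro rfl
      exact (mem_erase.1 hπ).1 (eq_fullPart_of_univ_mem_parts hB)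
    have hcard := (Nat.sub_add_cancel (π.nonempty_of_mem_parts hB).card_pos).symm
    rw [partCoeff_eq_of_card _ w hcard, partCoeff_eq_of_card _ w hcard, ih _ (by omega)]
  have hn := h n w
  have hfull : fullPart n ∈ ({π | IsNC π} : Finset (FP (n + 1))) :=
    (mem_filter_univ _).2 (isNC_fullPart n)
  rwa [← add_sum_erase _ _ hfull, ← add_sum_erase _ _ hfull, sum_congr rfl hproper,
    add_left_inj, genCoeff_fullPart, genCoeff_fullPart] at hn

end Coefficients

lemma IsRTransform.eq_neg_irreducibleSum_neg {μ : Dist k} {f g : NCSeries k}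
    (hf : IsRTransform μ f) (hg : IsEtaSeries μ g) : f = -irreducibleSum (-g) := by
  refine eq_of_sum_isNC_genCoeff_eq fun n w ↦ ?_
  rw [sum_isNC_genCoeff_neg_irreducibleSum_neg, sum_filter, sum_filter, ← hf n w, ← hg n w]

/-- Proposition 3.9.2: if `f = R_μ` and `g = η_μ`, then
`Cf_w(f) = Σ_{ρ ∈ NC(n), ρ ≪ 1_n} (-1)^{1+|ρ|} Cf_{w;ρ}(g)`. -/
theorem statement5 (k : ℕ) (hk : 0 < k) (μ : Dist k) (hμ : IsDalg μ)
    (f g : NCSeries k) (hf : IsRTransform μ f) (hg : IsEtaSeries μ g)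
    (n : ℕ) (w : Fin (n+1) → Fin k) :
    f n w = ∑ ρ : FP (n+1),
      if IsNC ρ ∧ Ll ρ (fullPart n) then
        (-1 : ℂ) ^ (1 + ρ.parts.card) * genCoeff g w ρ
      else 0 := by
  rw [hf.eq_neg_irreducibleSum_neg hg, Pi.neg_apply, Pi.neg_apply, irreducibleSum,
    ← sum_neg_distrib, sum_filter]
  refine sum_congr rfl fun ρ _ ↦ ?_
  split_ifs
  · rw [genCoeff_neg, pow_add, pow_one, mul_assoc, neg_one_mul]
  · rfl

end BBP
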